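/- Let $n \ge 1$, let $a, b$ be nonzero $n \times n$ complex matrices, let $p > 1$ and $q > 1$ satisfy $1/p + 1/q = 1$. Then $\|a b^*\|_1 = \|a\|_p \, \|b\|_q$ if and only if $\dfrac{|a|^p}{\|a\|_p^p} = \dfrac{|b|^q}{\|b\|_q^q}$. -/

import Mathlib

open Matrix
open scoped ComplexOrder MatrixOrder

/-- `matAbs x` is `|x|`, the unique positive semidefinite square root of `xᴴ * x`. -/
noncomputable def matAbs {n : ℕ} (x : Matrix (Fin n) (Fin n) ℂ) : Matrix (Fin n) (Fin n) ℂ :=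
  CFC.sqrt (xᴴ * x)

/-- `matRpow x r` is the real power `x ^ r` defined via the continuous functional calculus. -/
noncomputable def matRpow {n : ℕ} (x : Matrix (Fin n) (Fin n) ℂ) (r : ℝ) :
    Matrix (Fin n) (Fin n) ℂ :=
  cfc (fun t : ℝ => t ^ r) x

/-- The Schatten `r`-norm `(Tr(|x|^r))^(1/r)`. -/
noncomputable def schatten {n : ℕ} (r : ℝ) (x : Matrix (Fin n) (Fin n) ℂ) : ℝ :=
  (Matrix.trace (matRpow (matAbs x) r)).re ^ (1 / r)

/-!
In terms of polar decompositions, `‖a * bᴴ‖₁ = ‖|a| * |b|‖₁ = re Tr (W * |a| * |b|)` for some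
unitary `W`. In eigenbases of `|a|` and `|b|`, with eigenvalues `α i` and `β j`, this trace is
`∑ i j, α i * β j * re (G j i * H i j)` with `G` and `H` unitary. The weights
`(‖G j i‖ ^ 2 + ‖H i j‖ ^ 2) / 2` form a doubly stochastic matrix, so Young's inequality bounds the
sum by `Tr |a| ^ p / p + Tr |b| ^ q / q`, and equality forces `α i ^ p = β j ^ q` whenever
`H i j ≠ 0`, that is, `|a| ^ p = |b| ^ q`. Conversely, if `|a| ^ p = |b| ^ q = c` then
`|a| * |b| = c ^ (1 / p) * c ^ (1 / q) = c`. After scaling `a` and `b` to unit norm, equality in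
this trace form of Young's inequality is equality in Hölder's inequality.
-/

section FunctionalCalculus

variable {R : Type*} [Ring R] [PartialOrder R] [StarRing R] [StarOrderedRing R]
  [TopologicalSpace R] [IsTopologicalRing R] [T2Space R] [Algebra ℝ R]
  [ContinuousFunctionalCalculus ℝ R IsSelfAdjoint] [NonnegSpectrumClass ℝ R]

theorem smul_rpow_of_nonneg [PosSMulMono ℝ R] {a : R} (ha : 0 ≤ a) {c r : ℝ} (hc : 0 ≤ c)
    (hr : 0 ≤ r) : (c • a) ^ r = c ^ r • a ^ r := by
  have hcont : Continuous fun t : ℝ ↦ t ^ r := Real.continuous_rpow_const hr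
  rw [CFC.rpow_eq_cfc_real (a := c • a) (smul_nonneg hc ha), CFC.rpow_eq_cfc_real,
    ← cfc_comp_smul c (fun t : ℝ ↦ t ^ r) a hcont.continuousOn,
    ← cfc_smul _ _ _ hcont.continuousOn]
  refine cfc_congr fun t ht ↦ ?_
  rw [smul_eq_mul, smul_eq_mul, Real.mul_rpow hc (spectrum_nonneg_of_nonneg ha ht)]

theorem abs_unitary_mul_mul_star {u v : R} (hu : u ∈ unitary R) (hv : v ∈ unitary R) (x : R) :
    CFC.abs (u * x * star v) = v * CFC.abs x * star v := by
  refine CFC.sqrt_unique ?_ (star_right_conjugate_nonneg (CFC.abs_nonneg x) v)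
  calc v * CFC.abs x * star v * (v * CFC.abs x * star v)
      = v * CFC.abs x * (star v * v) * CFC.abs x * star v := by simp only [mul_assoc]
    _ = v * (CFC.abs x * CFC.abs x) * star v := by
        rw [Unitary.star_mul_self_of_mem hv, mul_one, mul_assoc v]
    _ = v * (star x * (star u * u) * x) * star v := by
        rw [CFC.abs_mul_abs, Unitary.star_mul_self_of_mem hu, mul_one]
    _ = star (u * x * star v) * (u * x * star v) := by
        simp only [star_mul, star_star, mul_assoc]

theorem mul_eq_rpow_of_rpow_eq_rpow {a b : R} (ha : 0 ≤ a) (hb : 0 ≤ b) {p q : ℝ}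
    (hpq : p.HolderConjugate q) (h : a ^ p = b ^ q) : a * b = a ^ p := by
  lift p to NNReal using hpq.nonneg
  lift q to NNReal using hpq.symm.nonneg
  replace hpq : p.HolderConjugate q := NNReal.holderConjugate_coe_iff.mp hpq
  rw [← CFC.nnrpow_eq_rpow hpq.pos, ← CFC.nnrpow_eq_rpow hpq.symm.pos] at h
  rw [← CFC.nnrpow_eq_rpow hpq.pos]
  calc a * b = (a ^ p) ^ p⁻¹ * (b ^ q) ^ q⁻¹ := by
        rw [CFC.nnrpow_nnrpow_inv a hpq.ne_zero, CFC.nnrpow_nnrpow_inv b hpq.symm.ne_zero]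
    _ = (a ^ p) ^ (p⁻¹ + q⁻¹) := by
        rw [← h, CFC.nnrpow_add (inv_pos.mpr hpq.pos) (inv_pos.mpr hpq.symm.pos)]
    _ = a ^ p := by rw [hpq.inv_add_inv_eq_one, CFC.nnrpow_one _ CFC.nnrpow_nonneg]

end FunctionalCalculus

section Matrices

variable {m n 𝕜 : Type*} [RCLike 𝕜]

theorem exists_linearIsometry_comp_eq_of_norm_eq {E V : Type*} [AddCommGroup E] [Module 𝕜 E]
    [NormedAddCommGroup V] [InnerProductSpace 𝕜 V] [FiniteDimensional 𝕜 V] {S T : E →ₗ[𝕜] V}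
    (hST : ∀ v, ‖S v‖ = ‖T v‖) : ∃ L : V →ₗᵢ[𝕜] V, L.toLinearMap ∘ₗ T = S := by
  obtain ⟨g, hg⟩ := T.rangeRestrict.exists_rightInverse_of_surjective T.range_rangeRestrict
  have T_comp_section (w : T.range) : T (g w) = w := congr(($(LinearMap.congr_fun hg w) : V))
  let L : T.range →ₗᵢ[𝕜] V := ⟨S ∘ₗ g, fun w ↦ by simp [hST, T_comp_section]⟩
  refine ⟨L.extend, LinearMap.ext fun v ↦ ?_⟩
  have S_comp_section : S (g ⟨T v, v, rfl⟩) = S v := by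
    rw [← sub_eq_zero, ← map_sub, ← norm_eq_zero, hST, map_sub, T_comp_section, sub_self, norm_zero]
  exact (L.extend_apply ⟨T v, v, rfl⟩).trans S_comp_section

theorem norm_toEuclideanLin_eq_of_conjTranspose_mul_self_eq [Fintype m] [Fintype n] [DecidableEq n]
    {x y : Matrix m n 𝕜} (hxy : xᴴ * x = yᴴ * y) (v : EuclideanSpace 𝕜 n) :
    ‖toEuclideanLin x v‖ = ‖toEuclideanLin y v‖ := by
  have inner_self (z : Matrix m n 𝕜) :
      inner 𝕜 (toEuclideanLin z v) (toEuclideanLin z v) =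
        inner 𝕜 v (toEuclideanLin (zᴴ * z) v) := by
    classical
    rw [toLpLin_mul 2 2 2, toEuclideanLin_conjTranspose_eq_adjoint, LinearMap.comp_apply,
      LinearMap.adjoint_inner_right]
  rw [norm_eq_sqrt_re_inner (𝕜 := 𝕜), norm_eq_sqrt_re_inner (𝕜 := 𝕜), inner_self, inner_self, hxy]

theorem exists_unitary_mul_eq_of_conjTranspose_mul_self_eq [Fintype m] [DecidableEq m] [Finite n]
    {x y : Matrix m n 𝕜} (hxy : xᴴ * x = yᴴ * y) : ∃ U ∈ unitaryGroup m 𝕜, U * y = x := by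
  classical
  cases nonempty_fintype n
  obtain ⟨L, hL⟩ := exists_linearIsometry_comp_eq_of_norm_eq
    (norm_toEuclideanLin_eq_of_conjTranspose_mul_self_eq hxy)
  obtain ⟨U, hUL⟩ : ∃ U : Matrix m m 𝕜, toEuclideanCLM (𝕜 := 𝕜) U = L.toContinuousLinearMap :=
    EquivLike.surjective _ _
  refine ⟨U, mem_unitaryGroup_iff'.mpr (EquivLike.injective (toEuclideanCLM (𝕜 := 𝕜)) ?_),
    toEuclideanLin.injective ?_⟩
  · rw [map_mul, map_star, map_one, hUL]
    exact L.adjoint_comp_self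
  · rw [← hL, toLpLin_mul 2 2 2, ← coe_toEuclideanCLM_eq_toEuclideanLin, hUL]
    rfl

variable [Fintype n] [DecidableEq n]

theorem exists_unitary_mul_abs_eq (x : Matrix n n 𝕜) :
    ∃ U ∈ unitaryGroup n 𝕜, U * CFC.abs x = x :=
  exists_unitary_mul_eq_of_conjTranspose_mul_self_eq <| by
    rw [← star_eq_conjTranspose (CFC.abs x), (CFC.abs_nonneg x).star_eq, CFC.abs_mul_abs,
      star_eq_conjTranspose]

theorem trace_abs_mul_conjTranspose (a b : Matrix n n 𝕜) :
    trace (CFC.abs (a * bᴴ)) = trace (CFC.abs (CFC.abs a * CFC.abs b)) := by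
  obtain ⟨U, hU, hUa⟩ := exists_unitary_mul_abs_eq a
  obtain ⟨V, hV, hVb⟩ := exists_unitary_mul_abs_eq b
  have polar : a * bᴴ = U * (CFC.abs a * CFC.abs b) * star V := by
    nth_rw 1 [← hUa, ← hVb, ← star_eq_conjTranspose, star_mul, (CFC.abs_nonneg b).star_eq]
    noncomm_ring
  rw [polar, abs_unitary_mul_mul_star hU hV, trace_mul_cycle, mem_unitaryGroup_iff'.mp hV, one_mul]

theorem exists_unitary_rpow_eq_conj_diagonal {A : Matrix n n 𝕜} (hA : 0 ≤ A) :
    ∃ U ∈ unitaryGroup n 𝕜, ∃ α : n → ℝ, (∀ i, 0 ≤ α i) ∧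
      ∀ r : ℝ, A ^ r = U * diagonal (fun i ↦ ((α i ^ r : ℝ) : 𝕜)) * star U := by
  have hA' := nonneg_iff_posSemidef.mp hA
  refine ⟨hA'.1.eigenvectorUnitary, Subtype.property _, hA'.1.eigenvalues, hA'.eigenvalues_nonneg,
    fun r ↦ ?_⟩
  rw [CFC.rpow_eq_cfc_real, hA'.1.cfc_eq, IsHermitian.cfc, Unitary.conjStarAlgAut_apply]
  rfl

theorem re_trace_conj_diagonal {U : Matrix n n 𝕜} (hU : U ∈ unitaryGroup n 𝕜) (d : n → ℝ) :
    RCLike.re (trace (U * diagonal (fun i ↦ (d i : 𝕜)) * star U)) = ∑ i, d i := by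
  rw [trace_mul_cycle, mem_unitaryGroup_iff'.mp hU, one_mul, trace_diagonal]
  simp

theorem re_trace_rpow_nonneg (A : Matrix n n 𝕜) (r : ℝ) : 0 ≤ RCLike.re (trace (A ^ r)) :=
  (RCLike.nonneg_iff.mp (nonneg_iff_posSemidef.mp CFC.rpow_nonneg).trace_nonneg).1

theorem re_trace_rpow_pos {A : Matrix n n 𝕜} (hA : 0 ≤ A) (hA₀ : A ≠ 0) (r : ℝ) :
    0 < RCLike.re (trace (A ^ r)) := by
  obtain ⟨U, hU, α, hα, hAU⟩ := exists_unitary_rpow_eq_conj_diagonal hA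
  obtain ⟨i, hi⟩ : ∃ i, α i ≠ 0 := by
    by_contra! hα₀
    apply hA₀
    rw [← CFC.rpow_one A, hAU]
    simp [hα₀]
  rw [hAU, re_trace_conj_diagonal hU]
  exact Finset.sum_pos' (fun j _ ↦ Real.rpow_nonneg (hα j) r)
    ⟨i, Finset.mem_univ i, Real.rpow_pos_of_pos ((hα i).lt_of_ne' hi) r⟩

theorem re_trace_mul_diagonal_mul_diagonal (G H : Matrix n n 𝕜) (α β : n → ℝ) :
    RCLike.re (trace (G * diagonal (fun i ↦ (α i : 𝕜)) * H * diagonal (fun j ↦ (β j : 𝕜)))) =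
      ∑ i, ∑ j, α i * β j * RCLike.re (G j i * H i j) := by
  rw [Finset.sum_comm]
  simp only [trace, diag, mul_diagonal, mul_apply (M := G * _), map_sum, Finset.sum_mul]
  refine Finset.sum_congr rfl fun j _ ↦ Finset.sum_congr rfl fun i _ ↦ ?_
  rw [← RCLike.re_ofReal_mul]
  congr 1
  push_cast
  ring

theorem conj_diagonal_eq_conj_diagonal_of_star_mul {R : Type*} [CommRing R] [StarRing R]
    {E F : Matrix n n R} (hE : E ∈ unitaryGroup n R) (hF : F ∈ unitaryGroup n R) {d e : n → R}
    (h : ∀ i j, (star E * F) i j ≠ 0 → d i = e j) :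
    E * diagonal d * star E = F * diagonal e * star F := by
  have intertwine : diagonal d * (star E * F) = star E * F * diagonal e := by
    ext i j
    rw [diagonal_mul, mul_diagonal, mul_comm]
    by_cases hij : (star E * F) i j = 0
    · simp only [hij, zero_mul]
    · rw [h i j hij]
  calc E * diagonal d * star E = E * (diagonal d * (star E * F)) * star F := by
        simp only [mul_assoc, mem_unitaryGroup_iff.mp hF, mul_one]
    _ = E * star E * F * diagonal e * star F := by rw [intertwine]; simp only [mul_assoc]
    _ = F * diagonal e * star F := by rw [mem_unitaryGroup_iff.mp hE, one_mul]

theorem normSq_mem_doublyStochastic {U : Matrix n n 𝕜} (hU : U ∈ unitaryGroup n 𝕜) :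
    of (fun i j ↦ ‖U i j‖ ^ 2) ∈ doublyStochastic ℝ n := by
  have sum_row {V : Matrix n n 𝕜} (hV : V ∈ unitaryGroup n 𝕜) (i : n) : ∑ j, ‖V i j‖ ^ 2 = 1 := by
    have := congr($(mem_unitaryGroup_iff.mp hV) i i)
    simp only [mul_apply, star_apply, RCLike.star_def, RCLike.mul_conj, one_apply_eq] at this
    exact_mod_cast this
  refine mem_doublyStochastic_iff_sum.mpr ⟨fun i j ↦ sq_nonneg _, sum_row hU, fun j ↦ ?_⟩
  simpa using sum_row (Unitary.star_mem hU) j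

theorem sum_add_mul_of_mem_doublyStochastic {R : Type*} [Semiring R] [PartialOrder R]
    [IsOrderedRing R] {M : Matrix n n R} (hM : M ∈ doublyStochastic R n) (f g : n → R) :
    ∑ i, ∑ j, (f i + g j) * M i j = ∑ i, f i + ∑ j, g j := by
  simp only [add_mul, Finset.sum_add_distrib]
  rw [Finset.sum_comm (f := fun i j ↦ g j * M i j)]
  simp only [← Finset.mul_sum, sum_row_of_mem_doublyStochastic hM,
    sum_col_of_mem_doublyStochastic hM, mul_one]

theorem rpow_eq_rpow_of_young_le_sum {M : Matrix n n ℝ} (hM : M ∈ doublyStochastic ℝ n) {p q : ℝ}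
    (hpq : p.HolderConjugate q) {α β : n → ℝ} (hα : ∀ i, 0 ≤ α i) (hβ : ∀ j, 0 ≤ β j)
    (h : (∑ i, α i ^ p) / p + (∑ j, β j ^ q) / q ≤ ∑ i, ∑ j, α i * β j * M i j)
    {i j : n} (hij : M i j ≠ 0) : α i ^ p = β j ^ q := by
  have young (i j : n) : α i * β j * M i j ≤ (α i ^ p / p + β j ^ q / q) * M i j :=
    mul_le_mul_of_nonneg_right (Real.young_inequality_of_nonneg (hα i) (hβ j) hpq)
      (nonneg_of_mem_doublyStochastic hM)
  have sum_eq : ∑ i, ∑ j, α i * β j * M i j = ∑ i, ∑ j, (α i ^ p / p + β j ^ q / q) * M i j := by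
    refine le_antisymm (Finset.sum_le_sum fun i _ ↦ Finset.sum_le_sum fun j _ ↦ young i j) ?_
    rw [sum_add_mul_of_mem_doublyStochastic hM, ← Finset.sum_div, ← Finset.sum_div]
    exact h
  have row_eq := (Finset.sum_eq_sum_iff_of_le fun i _ ↦
    Finset.sum_le_sum fun j _ ↦ young i j).mp sum_eq i (Finset.mem_univ i)
  have entry_eq := (Finset.sum_eq_sum_iff_of_le fun j _ ↦ young i j).mp row_eq j (Finset.mem_univ j)
  exact (Real.young_inequality_eq_iff_of_nonneg (hα i) (hβ j) hpq).mp
    (mul_right_cancel₀ hij entry_eq)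

theorem rpow_eq_rpow_of_sum_mul_re_eq {G H : Matrix n n 𝕜} (hG : G ∈ unitaryGroup n 𝕜)
    (hH : H ∈ unitaryGroup n 𝕜) {p q : ℝ} (hpq : p.HolderConjugate q) {α β : n → ℝ}
    (hα : ∀ i, 0 ≤ α i) (hβ : ∀ j, 0 ≤ β j)
    (h : ∑ i, ∑ j, α i * β j * RCLike.re (G j i * H i j) =
      (∑ i, α i ^ p) / p + (∑ j, β j ^ q) / q)
    {i j : n} (hij : H i j ≠ 0) : α i ^ p = β j ^ q := by
  let M : Matrix n n ℝ :=
    (1 / 2 : ℝ) • of (fun i j ↦ ‖Gᵀ i j‖ ^ 2) + (1 / 2 : ℝ) • of (fun i j ↦ ‖H i j‖ ^ 2)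
  have hM : M ∈ doublyStochastic ℝ n := convex_doublyStochastic
    (normSq_mem_doublyStochastic (transpose_mem_unitaryGroup_iff.mpr hG))
    (normSq_mem_doublyStochastic hH) one_half_pos.le one_half_pos.le (add_halves 1)
  have M_apply (i j : n) : M i j = 1 / 2 * ‖G j i‖ ^ 2 + 1 / 2 * ‖H i j‖ ^ 2 := rfl
  have re_le (i j : n) : RCLike.re (G j i * H i j) ≤ M i j := calc
    RCLike.re (G j i * H i j) ≤ ‖G j i * H i j‖ := RCLike.re_le_norm _
    _ = ‖G j i‖ * ‖H i j‖ := norm_mul _ _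
    _ ≤ M i j := by linarith [M_apply i j, two_mul_le_add_sq ‖G j i‖ ‖H i j‖]
  have M_ne_zero : M i j ≠ 0 := by
    have := norm_pos_iff.mpr hij
    rw [M_apply]
    positivity
  refine rpow_eq_rpow_of_young_le_sum hM hpq hα hβ ?_ M_ne_zero
  rw [← h]
  gcongr with i _ j _
  · exact mul_nonneg (hα i) (hβ j)
  · exact re_le i j

theorem rpow_eq_rpow_of_re_trace_unitary_mul_eq {W A B : Matrix n n 𝕜} (hW : W ∈ unitaryGroup n 𝕜)
    (hA : 0 ≤ A) (hB : 0 ≤ B) {p q : ℝ} (hpq : p.HolderConjugate q)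
    (h : RCLike.re (trace (W * (A * B))) =
      RCLike.re (trace (A ^ p)) / p + RCLike.re (trace (B ^ q)) / q) :
    A ^ p = B ^ q := by
  obtain ⟨E, hE, α, hα, hAE⟩ := exists_unitary_rpow_eq_conj_diagonal hA
  obtain ⟨F, hF, β, hβ, hBF⟩ := exists_unitary_rpow_eq_conj_diagonal hB
  have hG : star F * W * E ∈ unitaryGroup n 𝕜 := mul_mem (mul_mem (Unitary.star_mem hF) hW) hE
  have hH : star E * F ∈ unitaryGroup n 𝕜 := mul_mem (Unitary.star_mem hE) hF
  have trace_eq : RCLike.re (trace (W * (A * B))) =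
      ∑ i, ∑ j, α i * β j * RCLike.re ((star F * W * E) j i * (star E * F) i j) := by
    rw [← re_trace_mul_diagonal_mul_diagonal, ← CFC.rpow_one A, ← CFC.rpow_one B, hAE, hBF]
    simp only [Real.rpow_one, ← mul_assoc]
    rw [trace_mul_comm]
    simp only [mul_assoc]
  rw [trace_eq, hAE, hBF, re_trace_conj_diagonal hE, re_trace_conj_diagonal hF] at h
  rw [hAE, hBF]
  exact conj_diagonal_eq_conj_diagonal_of_star_mul hE hF fun i j hij ↦
    congrArg _ (rpow_eq_rpow_of_sum_mul_re_eq hG hH hpq hα hβ h hij)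

theorem re_trace_abs_mul_conjTranspose_eq_young_iff (a b : Matrix n n 𝕜) {p q : ℝ}
    (hpq : p.HolderConjugate q) :
    RCLike.re (trace (CFC.abs (a * bᴴ))) =
        RCLike.re (trace (CFC.abs a ^ p)) / p + RCLike.re (trace (CFC.abs b ^ q)) / q ↔
      CFC.abs a ^ p = CFC.abs b ^ q := by
  rw [trace_abs_mul_conjTranspose]
  constructor
  · intro h
    obtain ⟨U, hU, hUab⟩ := exists_unitary_mul_abs_eq (CFC.abs a * CFC.abs b)
    refine rpow_eq_rpow_of_re_trace_unitary_mul_eq (Unitary.star_mem hU) (CFC.abs_nonneg a)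
      (CFC.abs_nonneg b) hpq ?_
    rw [← h]
    nth_rw 1 [← hUab]
    rw [← mul_assoc, mem_unitaryGroup_iff'.mp hU, one_mul]
  · intro h
    rw [mul_eq_rpow_of_rpow_eq_rpow (CFC.abs_nonneg a) (CFC.abs_nonneg b) hpq h,
      CFC.abs_of_nonneg _ CFC.rpow_nonneg, ← h, div_eq_mul_inv,
      div_eq_mul_inv, ← mul_add, hpq.inv_add_inv_eq_one, mul_one]

end Matrices

section Schatten

variable {n : ℕ}

theorem matRpow_matAbs (x : Matrix (Fin n) (Fin n) ℂ) (r : ℝ) :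
    matRpow (matAbs x) r = CFC.abs x ^ r :=
  (CFC.rpow_eq_cfc_real (CFC.abs_nonneg x)).symm

theorem schatten_eq (r : ℝ) (x : Matrix (Fin n) (Fin n) ℂ) :
    schatten r x = RCLike.re (trace (CFC.abs x ^ r)) ^ r⁻¹ := by
  rw [schatten, matRpow_matAbs, one_div]
  rfl

theorem schatten_one (x : Matrix (Fin n) (Fin n) ℂ) :
    schatten 1 x = RCLike.re (trace (CFC.abs x)) := by
  rw [schatten_eq, CFC.rpow_one _, inv_one, Real.rpow_one]

theorem schatten_rpow_self {r : ℝ} (hr : r ≠ 0) (x : Matrix (Fin n) (Fin n) ℂ) :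
    schatten r x ^ r = RCLike.re (trace (CFC.abs x ^ r)) := by
  rw [schatten_eq, Real.rpow_inv_rpow (re_trace_rpow_nonneg _ r) hr]

theorem schatten_pos (r : ℝ) {x : Matrix (Fin n) (Fin n) ℂ} (hx : x ≠ 0) : 0 < schatten r x := by
  have abs_ne_zero : CFC.abs x ≠ 0 := by
    obtain ⟨U, -, hUx⟩ := exists_unitary_mul_abs_eq x
    intro habs
    exact hx (by rw [← hUx, habs, mul_zero])
  rw [schatten_eq]
  exact Real.rpow_pos_of_pos (re_trace_rpow_pos (CFC.abs_nonneg x) abs_ne_zero r) _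

theorem matRpow_matAbs_smul {c r : ℝ} (hc : 0 ≤ c) (hr : 0 ≤ r) (x : Matrix (Fin n) (Fin n) ℂ) :
    matRpow (matAbs (c • x)) r = c ^ r • matRpow (matAbs x) r := by
  rw [matRpow_matAbs, matRpow_matAbs, CFC.abs_smul, Real.norm_of_nonneg hc,
    smul_rpow_of_nonneg (CFC.abs_nonneg x) hc hr]

theorem schatten_smul {c r : ℝ} (hc : 0 ≤ c) (hr : 0 < r) (x : Matrix (Fin n) (Fin n) ℂ) :
    schatten r (c • x) = c * schatten r x := by
  rw [schatten_eq, schatten_eq, ← matRpow_matAbs, matRpow_matAbs_smul hc hr.le, trace_smul,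
    RCLike.smul_re, matRpow_matAbs,
    Real.mul_rpow (Real.rpow_nonneg hc r) (re_trace_rpow_nonneg _ r), Real.rpow_rpow_inv hc hr.ne']

theorem schatten_inv_smul_self {r : ℝ} (hr : 0 < r) {x : Matrix (Fin n) (Fin n) ℂ} (hx : x ≠ 0) :
    schatten r ((schatten r x)⁻¹ • x) = 1 := by
  have hpos := schatten_pos r hx
  rw [schatten_smul (inv_nonneg.mpr hpos.le) hr, inv_mul_cancel₀ hpos.ne']

theorem schatten_one_mul_conjTranspose_eq_young_iff (a b : Matrix (Fin n) (Fin n) ℂ) {p q : ℝ}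
    (hpq : p.HolderConjugate q) :
    schatten 1 (a * bᴴ) = schatten p a ^ p / p + schatten q b ^ q / q ↔
      matRpow (matAbs a) p = matRpow (matAbs b) q := by
  rw [schatten_one, schatten_rpow_self hpq.ne_zero, schatten_rpow_self hpq.symm.ne_zero,
    matRpow_matAbs, matRpow_matAbs]
  exact re_trace_abs_mul_conjTranspose_eq_young_iff a b hpq

end Schatten

theorem holder_equality_iff_normalized {n : ℕ} (hn : 1 ≤ n)
    (a b : Matrix (Fin n) (Fin n) ℂ) (ha : a ≠ 0) (hb : b ≠ 0) (p q : ℝ)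
    (hp : 1 < p) (hq : 1 < q) (hpq : 1 / p + 1 / q = 1) :
    schatten 1 (a * bᴴ) = schatten p a * schatten q b ↔
      (schatten p a ^ p)⁻¹ • matRpow (matAbs a) p
        = (schatten q b ^ q)⁻¹ • matRpow (matAbs b) q := by
  have conj : p.HolderConjugate q :=
    Real.holderConjugate_iff.mpr ⟨hp, by rw [← one_div, ← one_div, hpq]⟩
  have hs := schatten_pos p ha
  have ht := schatten_pos q hb
  set s := schatten p a
  set t := schatten q b
  have product_smul : s⁻¹ • a * (t⁻¹ • b)ᴴ = (s * t)⁻¹ • (a * bᴴ) := by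
    rw [conjTranspose_smul, star_trivial, smul_mul_smul_comm, mul_inv]
  calc schatten 1 (a * bᴴ) = s * t
      ↔ schatten 1 (s⁻¹ • a * (t⁻¹ • b)ᴴ) = 1 := by
        rw [product_smul, schatten_smul (inv_nonneg.mpr (mul_pos hs ht).le) one_pos,
          inv_mul_eq_one₀ (mul_pos hs ht).ne', eq_comm]
    _ ↔ matRpow (matAbs (s⁻¹ • a)) p = matRpow (matAbs (t⁻¹ • b)) q := by
        rw [← schatten_one_mul_conjTranspose_eq_young_iff _ _ conj,
          schatten_inv_smul_self conj.pos ha, schatten_inv_smul_self conj.symm.pos hb,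
          Real.one_rpow, Real.one_rpow, hpq]
    _ ↔ (s ^ p)⁻¹ • matRpow (matAbs a) p = (t ^ q)⁻¹ • matRpow (matAbs b) q := by
        rw [matRpow_matAbs_smul (inv_nonneg.mpr hs.le) conj.nonneg, Real.inv_rpow hs.le,
          matRpow_matAbs_smul (inv_nonneg.mpr ht.le) conj.symm.nonneg, Real.inv_rpow ht.le]
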